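/- The ℂ-linear span of the ten functions θ⁴[δ₁], …, θ⁴[δ₁₀] (the fourth powers of the even theta constants, viewed as functions on H₂) has dimension exactly 5. -/

import Mathlib

open scoped BigOperators

namespace TwoLoop

/-- 2×2 complex matrices. -/
abbrev Mat2 := Matrix (Fin 2) (Fin 2) ℂ

/-- The genus-2 Siegel upper half space: symmetric 2×2 complex matrices with
positive definite imaginary part. -/
def SiegelH2 : Set Mat2 := {τ | τ.transpose = τ ∧ (τ.map Complex.im).PosDef}

/-- A (half-integer) theta characteristic `[a;b]`, recorded by its rows `a, b ∈ {0,1}²`. -/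
abbrev Char := (Fin 2 → ℤ) × (Fin 2 → ℤ)

/-- The theta constant `θ[a;b](τ) = Σ_{n ∈ ℤ²} exp(πi (n+a/2)ᵀ τ (n+a/2) + πi (n+a/2)·b)`. -/
noncomputable def theta (κ : Char) (τ : Mat2) : ℂ :=
  ∑' n : Fin 2 → ℤ,
    Complex.exp ((Real.pi : ℂ) * Complex.I *
      ((∑ i, ∑ j, ((n i : ℂ) + (κ.1 i : ℂ) / 2) * τ i j * ((n j : ℂ) + (κ.1 j : ℂ) / 2))
        + ∑ i, ((n i : ℂ) + (κ.1 i : ℂ) / 2) * (κ.2 i : ℂ)))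

/-- The ten even characteristics δ₁,…,δ₁₀. -/
def δev : Fin 10 → Char :=
  ![(![0,0], ![0,0]), (![0,0], ![0,1]), (![0,0], ![1,0]), (![0,0], ![1,1]),
    (![0,1], ![0,0]), (![0,1], ![1,0]), (![1,0], ![0,0]), (![1,0], ![0,1]),
    (![1,1], ![0,0]), (![1,1], ![1,1])]

/-- The six odd characteristics ν₁,…,ν₆. -/
def νodd : Fin 6 → Char :=
  ![(![0,1], ![0,1]), (![1,0], ![1,0]), (![0,1], ![1,1]),
    (![1,0], ![1,1]), (![1,1], ![0,1]), (![1,1], ![1,0])]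

/-- `Θ[ε](τ) = θ[ε;0](2τ)`. -/
noncomputable def Θf (ε : Fin 2 → ℤ) (τ : Mat2) : ℂ := theta (ε, ![0,0]) ((2 : ℂ) • τ)

noncomputable def P0 (τ : Mat2) : ℂ :=
  Θf ![0,0] τ ^ 4 + Θf ![0,1] τ ^ 4 + Θf ![1,0] τ ^ 4 + Θf ![1,1] τ ^ 4
noncomputable def P1 (τ : Mat2) : ℂ :=
  2 * (Θf ![0,0] τ ^ 2 * Θf ![0,1] τ ^ 2 + Θf ![1,0] τ ^ 2 * Θf ![1,1] τ ^ 2)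
noncomputable def P2 (τ : Mat2) : ℂ :=
  2 * (Θf ![0,0] τ ^ 2 * Θf ![1,0] τ ^ 2 + Θf ![0,1] τ ^ 2 * Θf ![1,1] τ ^ 2)
noncomputable def P3 (τ : Mat2) : ℂ :=
  2 * (Θf ![0,0] τ ^ 2 * Θf ![1,1] τ ^ 2 + Θf ![0,1] τ ^ 2 * Θf ![1,0] τ ^ 2)
noncomputable def P4 (τ : Mat2) : ℂ :=
  4 * (Θf ![0,0] τ * Θf ![0,1] τ * Θf ![1,0] τ * Θf ![1,1] τ)

/-- The vector `(P₀,…,P₄)`. -/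
noncomputable def Pv : Fin 5 → Mat2 → ℂ := ![P0, P1, P2, P3, P4]

open MvPolynomial in
/-- The Igusa quartic as a polynomial in `x₀,…,x₄`. -/
noncomputable def I4poly : MvPolynomial (Fin 5) ℂ :=
  X 4 ^ 4 + X 4 ^ 2 * X 0 ^ 2 - X 4 ^ 2 * X 1 ^ 2 - X 4 ^ 2 * X 2 ^ 2 - X 4 ^ 2 * X 3 ^ 2
    + X 1 ^ 2 * X 2 ^ 2 + X 1 ^ 2 * X 3 ^ 2 + X 2 ^ 2 * X 3 ^ 2
    - 2 * (X 0 * X 1 * X 2 * X 3)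

/-- The signature `⟨κ|λ⟩ = exp(πi(a_κ·b_λ − b_κ·a_λ))`. -/
noncomputable def sig (κ lam : Char) : ℂ :=
  Complex.exp ((Real.pi : ℂ) * Complex.I *
    (((∑ i, κ.1 i * lam.2 i : ℤ) : ℂ) - ((∑ i, κ.2 i * lam.1 i : ℤ) : ℂ)))

/-- Componentwise mod-2 sum of characteristics. -/
def addChar (κ lam : Char) : Char :=
  (fun i => (κ.1 i + lam.1 i) % 2, fun i => (κ.2 i + lam.2 i) % 2)

/-- For each even characteristic `δ_d`, the ordering `(k₁,…,k₆)` of `{1,…,6}` (0-indexed) whose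
first three entries form the triad of odd characteristics with `δ_d = ν_{k₁}+ν_{k₂}+ν_{k₃}`
and whose last three are the complementary indices. -/
def triad : Fin 10 → Fin 6 → Fin 6 :=
  ![![0,3,5,1,2,4], ![0,1,5,2,3,4], ![0,1,4,2,3,5], ![0,3,4,1,2,5], ![0,1,3,2,4,5],
    ![0,4,5,1,2,3], ![0,1,2,3,4,5], ![0,2,3,1,4,5], ![0,2,5,1,3,4], ![0,2,4,1,3,5]]

/-- D'Hoker–Phong's `Ξ₆[δ]`. -/
noncomputable def Xi6 (d : Fin 10) (τ : Mat2) : ℂ :=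
  ∑ i : Fin 3, ∑ j : Fin 3,
    if i < j then
      sig (νodd (triad d (Fin.castLE (by norm_num) i))) (νodd (triad d (Fin.castLE (by norm_num) j))) *
        ∏ m : Fin 3,
          theta (addChar (addChar (νodd (triad d (Fin.castLE (by norm_num) i)))
              (νodd (triad d (Fin.castLE (by norm_num) j))))
            (νodd (triad d (⟨m.1 + 3, by omega⟩ : Fin 6)))) τ ^ 4
    else 0

/-- The formal derivative `∂I₄/∂θ⁴[δ]` of the Igusa quartic with respect to the ten fourth
powers of the even theta constants, regarded as independent variables. -/
noncomputable def Dd (d : Fin 10) (τ : Mat2) : ℂ :=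
  (1 / 48 : ℂ) *
    (theta (δev d) τ ^ 4 * (∑ d' : Fin 10, theta (δev d') τ ^ 8) - 4 * theta (δev d) τ ^ 12)

/-- `f_δ = 2Ξ₆[δ] − ∂I₄/∂θ⁴[δ]`. -/
noncomputable def fδ (d : Fin 10) (τ : Mat2) : ℂ := 2 * Xi6 d τ - Dd d τ

/-- `Ψ₆`, the weight-6 modular form. -/
noncomputable def Ψ6 (τ : Mat2) : ℂ :=
  P0 τ ^ 3 - 9 * P0 τ * (P1 τ ^ 2 + P2 τ ^ 2 + P3 τ ^ 2 - 4 * P4 τ ^ 2)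
    + 54 * (P1 τ * P2 τ * P3 τ)

/-- `Ψ₁₀`, the weight-10 modular form. -/
noncomputable def Ψ10 (τ : Mat2) : ℂ := ∏ d : Fin 10, theta (δev d) τ ^ 2

/-- A characteristic is even when `a·b` is even. -/
def IsEvenChar (κ : Char) : Prop := (∑ i, κ.1 i * κ.2 i) % 2 = 0

/-- A characteristic is odd when `a·b` is odd. -/
def IsOddChar (κ : Char) : Prop := (∑ i, κ.1 i * κ.2 i) % 2 = 1


/-- The general term of the theta series. -/
noncomputable def tm (κ : Char) (τ : Mat2) (n : Fin 2 → ℤ) : ℂ :=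
  Complex.exp ((Real.pi : ℂ) * Complex.I *
      ((∑ i, ∑ j, ((n i : ℂ) + (κ.1 i : ℂ) / 2) * τ i j * ((n j : ℂ) + (κ.1 j : ℂ) / 2))
        + ∑ i, ((n i : ℂ) + (κ.1 i : ℂ) / 2) * (κ.2 i : ℂ)))

lemma theta_eq (κ : Char) (τ : Mat2) : theta κ τ = ∑' n, tm κ τ n := rfl

lemma norm_tm (κ : Char) (τ : Mat2) (n : Fin 2 → ℤ) :
    ‖tm κ τ n‖ = Real.exp (-Real.pi *
      (∑ i, ∑ j, ((n i : ℝ) + (κ.1 i : ℝ) / 2) * (τ i j).im * ((n j : ℝ) + (κ.1 j : ℝ) / 2))) := by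
  unfold tm
  rw [Complex.norm_exp]
  congr 1
  have h (z : ℂ) : ((Real.pi : ℂ) * Complex.I * z).re = -Real.pi * z.im := by
    simp
  rw [h]
  congr 1
  have e (i : Fin 2) : ((n i : ℂ) + (κ.1 i : ℂ) / 2) = (((n i : ℝ) + (κ.1 i : ℝ) / 2 : ℝ) : ℂ) := by
    push_cast; ring
  have e' (i : Fin 2) : (κ.2 i : ℂ) = ((κ.2 i : ℝ) : ℂ) := by
    push_cast; ring
  simp only [e, e', Fin.sum_univ_two, Complex.add_im, Complex.im_ofReal_mul,
    Complex.im_mul_ofReal, Complex.ofReal_im]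
  ring

lemma summable_gauss (c : ℝ) (hc : 0 < c) (s : ℝ) :
    Summable fun n : ℤ => Real.exp (-Real.pi * (c * ((n : ℝ) + s) ^ 2)) := by
  have h := ((summable_jacobiTheta₂_term_iff (Complex.I * (c * s : ℝ)) (Complex.I * c)).2
    (by simpa using hc)).norm
  refine (h.mul_left (Real.exp (-Real.pi * (c * s ^ 2)))).congr fun n => ?_
  rw [norm_jacobiTheta₂_term, ← Real.exp_add]
  congr 1
  simp
  ring

lemma posDef_bound {Y : Matrix (Fin 2) (Fin 2) ℝ} (hY : Y.PosDef) :
    ∃ c > 0, ∀ x : Fin 2 → ℝ, c * x 0 ^ 2 + c * x 1 ^ 2 ≤ ∑ i, ∑ j, x i * Y i j * x j := by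
  have hs : Y 1 0 = Y 0 1 := by
    have := congrFun (congrFun hY.isHermitian 0) 1
    simpa using this
  have hd := hY.det_pos
  rw [Matrix.det_fin_two, hs] at hd
  have h0 : 0 < Y 0 0 := hY.diag_pos
  have h1 : 0 < Y 1 1 := hY.diag_pos
  have ht : 0 < Y 0 0 + Y 1 1 := by positivity
  obtain ⟨c, hcd⟩ : ∃ c, c = (Y 0 0 * Y 1 1 - Y 0 1 * Y 0 1) / (Y 0 0 + Y 1 1) := ⟨_, rfl⟩
  have hc : 0 < c := by rw [hcd]; positivity
  have hcm : c * (Y 0 0 + Y 1 1) = Y 0 0 * Y 1 1 - Y 0 1 * Y 0 1 := by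
    rw [hcd]; field_simp
  refine ⟨c, hc, fun x => ?_⟩
  simp only [Fin.sum_univ_two, hs]
  have hp : 0 < Y 0 0 - c := by
    have : (Y 0 0 - c) * (Y 0 0 + Y 1 1) = Y 0 0 ^ 2 + Y 0 1 ^ 2 := by linear_combination -hcm
    have h2 : 0 < (Y 0 0 - c) * (Y 0 0 + Y 1 1) := by rw [this]; positivity
    exact pos_of_mul_pos_left h2 ht.le
  have key : (Y 0 0 - c) * ((x 0 * Y 0 0 * x 0 + x 0 * Y 0 1 * x 1 + (x 1 * Y 0 1 * x 0 + x 1 * Y 1 1 * x 1))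
      - (c * x 0 ^ 2 + c * x 1 ^ 2)) = ((Y 0 0 - c) * x 0 + Y 0 1 * x 1) ^ 2 + (c * x 1) ^ 2 := by
    linear_combination (-x 1 ^ 2) * hcm
  have : 0 ≤ (x 0 * Y 0 0 * x 0 + x 0 * Y 0 1 * x 1 + (x 1 * Y 0 1 * x 0 + x 1 * Y 1 1 * x 1))
      - (c * x 0 ^ 2 + c * x 1 ^ 2) := by
    refine nonneg_of_mul_nonneg_right (a := Y 0 0 - c) ?_ hp
    rw [key]; positivity
  linarith

lemma summable_norm_tm (κ : Char) {τ : Mat2} (hτ : τ ∈ SiegelH2) :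
    Summable fun n => ‖tm κ τ n‖ := by
  obtain ⟨c, hc, hb⟩ := posDef_bound hτ.2
  have h := (summable_gauss c hc ((κ.1 0 : ℝ) / 2)).mul_of_nonneg
    (summable_gauss c hc ((κ.1 1 : ℝ) / 2)) (fun _ => (Real.exp_pos _).le)
    (fun _ => (Real.exp_pos _).le)
  rw [← (finTwoArrowEquiv ℤ).summable_iff] at h
  refine Summable.of_nonneg_of_le (fun _ => norm_nonneg _) (fun n => ?_) h
  rw [norm_tm]
  simp only [Function.comp, finTwoArrowEquiv_apply]
  rw [← Real.exp_add]
  apply Real.exp_le_exp.2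
  have := hb fun i => (n i : ℝ) + (κ.1 i : ℝ) / 2
  simp only [Matrix.map_apply] at this
  rw [← mul_add]
  exact mul_le_mul_of_nonpos_left this (neg_nonpos.2 Real.pi_pos.le)

lemma two_smul_mem {τ : Mat2} (hτ : τ ∈ SiegelH2) : (2 : ℂ) • τ ∈ SiegelH2 := by
  refine ⟨by rw [Matrix.transpose_smul, hτ.1], ?_⟩
  have : ((2 : ℂ) • τ).map Complex.im = (2 : ℝ) • τ.map Complex.im := by
    ext i j; simp
  rw [this]
  exact hτ.2.smul (by norm_num)

/-- The integer vector attached to a vector of bits. -/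
def bits (e : Fin 2 → Fin 2) : Fin 2 → ℤ := fun i => ((e i : ℕ) : ℤ)

/-- The change of summation variables in the addition formula. -/
def chg (a : Fin 2 → ℤ) (x : (Fin 2 → Fin 2) × ((Fin 2 → ℤ) × (Fin 2 → ℤ))) :
    (Fin 2 → ℤ) × (Fin 2 → ℤ) :=
  (x.2.1 + x.2.2 + bits x.1, x.2.1 - x.2.2 - a)

lemma chg_bij (a : Fin 2 → ℤ) : Function.Bijective (chg a) := by
  constructor
  · rintro ⟨e, p, q⟩ ⟨e', p', q'⟩ h
    simp only [chg, Prod.mk.injEq] at h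
    obtain ⟨h1, h2⟩ := h
    have key (i : Fin 2) : e i = e' i ∧ p i = p' i ∧ q i = q' i := by
      have h1 := congrFun h1 i
      have h2 := congrFun h2 i
      simp only [Pi.add_apply, Pi.sub_apply, bits] at h1 h2
      have := (e i).2
      have := (e' i).2
      refine ⟨Fin.ext ?_, ?_, ?_⟩ <;> omega
    rw [funext fun i => (key i).1, funext fun i => (key i).2.1, funext fun i => (key i).2.2]
  · rintro ⟨n, m⟩
    refine ⟨(fun i => ⟨((n i + m i + a i) % 2).toNat, by omega⟩, fun i => (n i + m i + a i) / 2,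
      fun i => (n i + m i + a i) / 2 - a i - m i), ?_⟩
    simp only [chg, Prod.mk.injEq]
    constructor <;> funext i <;> simp only [Pi.add_apply, Pi.sub_apply, bits] <;> omega

/-- The sign in the addition formula. -/
noncomputable def sgn (e : Fin 2 → Fin 2) (b : Fin 2 → ℤ) : ℂ :=
  Complex.exp ((Real.pi : ℂ) * Complex.I * ((∑ i, bits e i * b i : ℤ) : ℂ))

lemma tm_mul (a b : Fin 2 → ℤ) (τ : Mat2) (e : Fin 2 → Fin 2) (p q : Fin 2 → ℤ) :
    tm (a, b) τ (p + q + bits e) * tm (a, b) τ (p - q - a) =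
      sgn e b * (tm (bits e, ![0,0]) ((2 : ℂ) • τ) p *
        tm (bits e + a, ![0,0]) ((2 : ℂ) • τ) q) := by
  unfold tm sgn
  simp only [← Complex.exp_add]
  rw [Complex.exp_eq_exp_iff_exists_int]
  refine ⟨∑ i, p i * b i, ?_⟩
  simp [Fin.sum_univ_two]
  ring

lemma theta_sq (a b : Fin 2 → ℤ) {τ : Mat2} (hτ : τ ∈ SiegelH2) :
    theta (a, b) τ ^ 2 = ∑ e, sgn e b * (Θf (bits e) τ * Θf (bits e + a) τ) := by
  have h1 := summable_norm_tm (a, b) hτ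
  have hs := summable_mul_of_summable_norm h1 h1
  rw [sq, theta_eq, tsum_mul_tsum_of_summable_norm h1 h1]
  rw [← (Equiv.ofBijective _ (chg_bij a)).tsum_eq]
  rw [← (Equiv.ofBijective _ (chg_bij a)).summable_iff] at hs
  refine (Summable.tsum_prod hs).trans ?_
  rw [tsum_fintype]
  refine Finset.sum_congr rfl fun e _ => ?_
  have g (k : Fin 2 → ℤ) := summable_norm_tm (k, ![0,0]) (two_smul_mem hτ)
  rw [Θf, Θf, theta_eq, theta_eq, tsum_mul_tsum_of_summable_norm (g _) (g _), ← tsum_mul_left]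
  exact tsum_congr fun x => tm_mul a b τ e x.1 x.2

lemma Θf_shift (a k : Fin 2 → ℤ) (τ : Mat2) : Θf (a + 2 * k) τ = Θf a τ := by
  unfold Θf
  rw [theta_eq, theta_eq, ← (Equiv.addRight k).tsum_eq (tm (a, ![0,0]) _)]
  refine tsum_congr fun n => ?_
  unfold tm
  congr 1
  simp [Fin.sum_univ_two]
  ring

lemma sum4 (f : (Fin 2 → Fin 2) → ℂ) :
    ∑ e, f e = f ![0,0] + f ![0,1] + f ![1,0] + f ![1,1] := by
  rw [← (finTwoArrowEquiv (Fin 2)).symm.sum_comp]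
  simp [Fintype.sum_prod_type, Fin.sum_univ_two]
  ring

lemma Θf_two_left (x : ℤ) (τ : Mat2) : Θf ![2, x] τ = Θf ![0, x] τ := by
  rw [← Θf_shift ![0, x] ![1, 0]]
  congr 1
  ext i; fin_cases i <;> simp

lemma Θf_two_right (x : ℤ) (τ : Mat2) : Θf ![x, 2] τ = Θf ![x, 0] τ := by
  rw [← Θf_shift ![x, 0] ![0, 1]]
  congr 1
  ext i; fin_cases i <;> simp

lemma bits_cons (x y : Fin 2) : bits ![x, y] = ![((x : ℕ) : ℤ), ((y : ℕ) : ℤ)] := by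
  ext i; fin_cases i <;> rfl

lemma exp_two_pi : Complex.exp ((Real.pi : ℂ) * Complex.I * 2) = 1 := by
  rw [← Complex.exp_two_pi_mul_I]; congr 1; ring

/-- Coefficients of the fourth powers of the theta constants in terms of the `P_k`. -/
noncomputable def cf : Fin 10 → Fin 5 → ℂ :=
  ![![1,1,1,1,0], ![1,-1,1,-1,0], ![1,1,-1,-1,0], ![1,-1,-1,1,0], ![0,2,0,0,2], ![0,2,0,0,-2],
    ![0,0,2,0,2], ![0,0,2,0,-2], ![0,0,0,2,2], ![0,0,0,2,-2]]

/-- Coefficients of the `P_k` in terms of the fourth powers. -/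
noncomputable def cg : Fin 5 → Fin 10 → ℂ :=
  ![![1/4,1/4,1/4,1/4,0,0,0,0,0,0], ![0,0,0,0,1/4,1/4,0,0,0,0], ![0,0,0,0,0,0,1/4,1/4,0,0],
    ![0,0,0,0,0,0,0,0,1/4,1/4], ![0,0,0,0,1/4,-1/4,0,0,0,0]]

lemma theta_four (d : Fin 10) {τ : Mat2} (hτ : τ ∈ SiegelH2) :
    theta (δev d) τ ^ 4 = ∑ k, cf d k * Pv k τ := by
  have h (κ : Char) : theta κ τ ^ 4 =
      (∑ e, sgn e κ.2 * (Θf (bits e) τ * Θf (bits e + κ.1) τ)) ^ 2 := by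
    rw [← theta_sq _ _ hτ, ← pow_mul]
  rw [h, sum4, Fin.sum_univ_five]
  fin_cases d <;>
  simp [δev, cf, Pv, P0, P1, P2, P3, P4, bits_cons, sgn, Fin.sum_univ_two, Complex.exp_pi_mul_I,
    exp_two_pi, Θf_two_left, Θf_two_right, one_add_one_eq_two] <;> ring

lemma P_eq (k : Fin 5) {τ : Mat2} (hτ : τ ∈ SiegelH2) :
    Pv k τ = ∑ d, cg k d * theta (δev d) τ ^ 4 := by
  simp only [theta_four _ hτ]
  fin_cases k <;> simp [Fin.sum_univ_succ, cf, cg] <;> ring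

/-- The base point `i·1` translated by an integral symmetric matrix. -/
noncomputable def pt (r s t : ℤ) : Mat2 := !![Complex.I + r, (t : ℂ); (t : ℂ), Complex.I + s]

lemma pt_mem (r s t : ℤ) : pt r s t ∈ SiegelH2 := by
  constructor
  · ext i j; fin_cases i <;> fin_cases j <;> simp [pt]
  · have : (pt r s t).map Complex.im = 1 := by
      ext i j; fin_cases i <;> fin_cases j <;> simp [pt]
    rw [this]; exact Matrix.PosDef.one

lemma Θf_trans (a : Fin 2 → ℤ) (r s t : ℤ) : Θf a (pt r s t) =
    Complex.exp ((Real.pi : ℂ) * Complex.I *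
      ((r * a 0 ^ 2 + s * a 1 ^ 2) / 2 + t * (a 0 * a 1))) * Θf a (pt 0 0 0) := by
  unfold Θf
  rw [theta_eq, theta_eq, ← tsum_mul_left]
  refine tsum_congr fun n => ?_
  unfold tm
  rw [← Complex.exp_add, Complex.exp_eq_exp_iff_exists_int]
  refine ⟨r * (n 0 ^ 2 + n 0 * a 0) + s * (n 1 ^ 2 + n 1 * a 1)
    + t * (2 * n 0 * n 1 + n 0 * a 1 + n 1 * a 0), ?_⟩
  simp [Fin.sum_univ_two, pt]
  ring

lemma Θf_pos (a : Fin 2 → ℤ) : ∃ x : ℝ, 0 < x ∧ Θf a (pt 0 0 0) = x := by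
  have hs := summable_norm_tm (a, ![0,0]) (two_smul_mem (pt_mem 0 0 0))
  refine ⟨∑' n, ‖tm (a, ![0,0]) ((2 : ℂ) • pt 0 0 0) n‖, ?_, ?_⟩
  · exact hs.tsum_pos (fun _ => norm_nonneg _) 0 (norm_pos_iff.2 (Complex.exp_ne_zero _))
  · rw [Complex.ofReal_tsum]
    unfold Θf
    rw [theta_eq]
    refine tsum_congr fun n => ?_
    rw [norm_tm, Complex.ofReal_exp, tm]
    congr 1
    simp [Fin.sum_univ_two, pt]
    linear_combination (2 * (Real.pi : ℂ) * ((n 0 + a 0 / 2) ^ 2 + (n 1 + a 1 / 2) ^ 2))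
      * Complex.I_sq

/-- The functions `P_k` on the Siegel space. -/
noncomputable def PS (k : Fin 5) : SiegelH2 → ℂ := fun τ => Pv k τ.1

lemma PS_indep : LinearIndependent ℂ PS := by
  rw [Fintype.linearIndependent_iff]
  intro g hg
  have ev (r s t : ℤ) : ∑ k, g k * Pv k (pt r s t) = 0 := by
    have := congrFun hg ⟨_, pt_mem r s t⟩
    simpa [PS] using this
  obtain ⟨x, hx, ex⟩ := Θf_pos ![0,0]
  obtain ⟨y, hy, ey⟩ := Θf_pos ![0,1]
  obtain ⟨z, hz, ez⟩ := Θf_pos ![1,0]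
  obtain ⟨w, hw, ew⟩ := Θf_pos ![1,1]
  have ei : Complex.exp ((Real.pi : ℂ) * Complex.I * 2⁻¹) = Complex.I := by
    refine Eq.trans ?_ Complex.exp_pi_div_two_mul_I
    congr 1; ring
  have q0 : ((x:ℂ) ^ 4 + y ^ 4 + z ^ 4 + w ^ 4) ≠ 0 := by norm_cast; positivity
  have q1 : ((x:ℂ) ^ 2 * y ^ 2 + z ^ 2 * w ^ 2) ≠ 0 := by norm_cast; positivity
  have q2 : ((x:ℂ) ^ 2 * z ^ 2 + y ^ 2 * w ^ 2) ≠ 0 := by norm_cast; positivity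
  have q3 : ((x:ℂ) ^ 2 * w ^ 2 + y ^ 2 * z ^ 2) ≠ 0 := by norm_cast; positivity
  have q4 : ((x:ℂ) * y * z * w) ≠ 0 := by norm_cast; positivity
  have vals (r s t : ℤ) (i j k : ℂ)
      (hi : Complex.exp ((Real.pi : ℂ) * Complex.I * (r / 2)) = i)
      (hj : Complex.exp ((Real.pi : ℂ) * Complex.I * (s / 2)) = j)
      (hk : Complex.exp ((Real.pi : ℂ) * Complex.I * t) = k) :
      g 0 * (x ^ 4 + (j * y) ^ 4 + (i * z) ^ 4 + (i * j * k * w) ^ 4)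
      + g 1 * (2 * (x ^ 2 * (j * y) ^ 2 + (i * z) ^ 2 * (i * j * k * w) ^ 2))
      + g 2 * (2 * (x ^ 2 * (i * z) ^ 2 + (j * y) ^ 2 * (i * j * k * w) ^ 2))
      + g 3 * (2 * (x ^ 2 * (i * j * k * w) ^ 2 + (j * y) ^ 2 * (i * z) ^ 2))
      + g 4 * (4 * (x * (j * y) * (i * z) * (i * j * k * w))) = 0 := by
    have h := ev r s t
    have e3 : Complex.exp ((Real.pi : ℂ) * Complex.I * ((r + s) / 2 + t)) = i * j * k := by
      rw [← hi, ← hj, ← hk, ← Complex.exp_add, ← Complex.exp_add]; congr 1; ring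
    rw [Fin.sum_univ_five] at h
    have fx : Θf ![0,0] (pt r s t) = x := by rw [Θf_trans, ex]; simp
    have fy : Θf ![0,1] (pt r s t) = j * y := by rw [Θf_trans, ey, ← hj]; simp
    have fz : Θf ![1,0] (pt r s t) = i * z := by rw [Θf_trans, ez, ← hi]; simp
    have fw : Θf ![1,1] (pt r s t) = i * j * k * w := by rw [Θf_trans, ew, ← e3]; simp
    change g 0 * P0 _ + g 1 * P1 _ + g 2 * P2 _ + g 3 * P3 _ + g 4 * P4 _ = 0 at h
    simpa only [P0, P1, P2, P3, P4, fx, fy, fz, fw] using h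
  have I2 := Complex.I_sq
  have I4 := Complex.I_pow_four
  have v0 := vals 0 0 0 1 1 1 (by simp) (by simp) (by simp)
  have v1 := vals 1 0 0 Complex.I 1 1 (by simpa using ei) (by simp) (by simp)
  have v2 := vals 0 1 0 1 Complex.I 1 (by simp) (by simpa using ei) (by simp)
  have v3 := vals 1 1 0 Complex.I Complex.I 1 (by simpa using ei) (by simpa using ei) (by simp)
  have v4 := vals 0 0 1 1 1 (-1) (by simp) (by simp) (by simp)
  simp only [mul_pow, I2, I4] at v0 v1 v2 v3 v4
  have z4 : g 4 = 0 := by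
    have : g 4 * (x * y * z * w) = 0 := by linear_combination (v0 - v4) / 8
    exact (mul_eq_zero.1 this).resolve_right q4
  simp only [z4, zero_mul, add_zero] at v0 v1 v2 v3 v4
  have z0 : g 0 = 0 := by
    refine (mul_eq_zero.1 ?_).resolve_right q0
    linear_combination (v0 + v1 + v2 + v3) / 4
  have z1 : g 1 = 0 := by
    refine (mul_eq_zero.1 ?_).resolve_right q1
    linear_combination (v0 + v1 - v2 - v3) / 8
  have z2 : g 2 = 0 := by
    refine (mul_eq_zero.1 ?_).resolve_right q2
    linear_combination (v0 - v1 + v2 - v3) / 8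
  have z3 : g 3 = 0 := by
    refine (mul_eq_zero.1 ?_).resolve_right q3
    linear_combination (v0 - v1 - v2 + v3) / 8
  intro i
  fin_cases i
  exacts [z0, z1, z2, z3, z4]

/-- the span of the ten functions `θ⁴[δ]` on `H₂` has dimension exactly 5. -/
theorem statement1 :
    Module.finrank ℂ ↥(Submodule.span ℂ
      (Set.range fun d : Fin 10 => fun τ : SiegelH2 => theta (δev d) τ.1 ^ 4)) = 5 := by
  have h : Submodule.span ℂ
      (Set.range fun d : Fin 10 => fun τ : SiegelH2 => theta (δev d) τ.1 ^ 4) =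
      Submodule.span ℂ (Set.range PS) := by
    apply le_antisymm <;> rw [Submodule.span_le] <;> rintro _ ⟨k, rfl⟩ <;>
      rw [SetLike.mem_coe, Submodule.mem_span_range_iff_exists_fun]
    · refine ⟨cf k, funext fun τ => ?_⟩
      simp only [theta_four k τ.2, Finset.sum_apply, Pi.smul_apply, smul_eq_mul, PS]
    · refine ⟨cg k, funext fun τ => ?_⟩
      simp only [PS, P_eq k τ.2, Finset.sum_apply, Pi.smul_apply, smul_eq_mul]
  rw [h, finrank_span_eq_card PS_indep, Fintype.card_fin]


end TwoLoop
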